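/- arXiv:1805.06778 — 3 statements merged into one kernel-verified Lean document; each statement's English description precedes it below -/
import Mathlib

section
/- Let X be a real Banach space with a Schauder basis (e_n). Then the following are equivalent: (a) (e_n) is partially greedy; (b) (e_n) is quasi-greedy and conservative; (c) there exists a constant C such that ‖x − G_m(x)‖ ≤ C·σ̃^L_m(x) for all x ∈ X, all m ∈ ℕ, and every greedy ordering for x. -/
open Filter Topology

/-- A Schauder basis of a real normed space `X`, given by basis vectors `e n` together with
biorthogonal (coordinate) functionals `f n`, such that every `x` is the limit of its
partial-sum expansion `∑_{n < N} f n x • e n`. -/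
structure SchauderBasisSys (X : Type*) [NormedAddCommGroup X] [NormedSpace ℝ X] where
  e : ℕ → X
  f : ℕ → X →L[ℝ] ℝ
  biorth : ∀ m n : ℕ, f m (e n) = if m = n then (1 : ℝ) else 0
  expansion : ∀ x : X,
    Filter.Tendsto (fun N : ℕ => ∑ n ∈ Finset.range N, f n x • e n) Filter.atTop (nhds x)

namespace SchauderBasisSys

variable {X : Type*} [NormedAddCommGroup X] [NormedSpace ℝ X]

/-- The coordinate projection onto a finite set `A` of indices: `P_A x = ∑_{i ∈ A} e_i^*(x) e_i`. -/
noncomputable def P (S : SchauderBasisSys X) (A : Finset ℕ) (x : X) : X :=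
  ∑ i ∈ A, S.f i x • S.e i

/-- The indicator vector `1_A = ∑_{i ∈ A} e_i`. -/
noncomputable def ind (S : SchauderBasisSys X) (A : Finset ℕ) : X :=
  ∑ i ∈ A, S.e i

/-- A greedy ordering for `x`: an injection `ρ : ℕ → ℕ` whose range contains the support of `x`
and which rearranges the coordinates of `x` in nonincreasing order of absolute value. -/
def IsGreedyOrdering (S : SchauderBasisSys X) (x : X) (ρ : ℕ → ℕ) : Prop :=
  Function.Injective ρ ∧ (∀ n : ℕ, S.f n x ≠ 0 → n ∈ Set.range ρ) ∧
    ∀ j k : ℕ, j ≤ k → |S.f (ρ k) x| ≤ |S.f (ρ j) x|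

/-- The greedy set `Λ_m(x) = {ρ(0), …, ρ(m-1)}` associated to a greedy ordering `ρ`. -/
def Lam (ρ : ℕ → ℕ) (m : ℕ) : Finset ℕ := (Finset.range m).image ρ

/-- The `m`-th greedy approximation `G_m(x) = ∑_{j < m} e_{ρ(j)}^*(x) e_{ρ(j)}`. -/
noncomputable def G (S : SchauderBasisSys X) (x : X) (ρ : ℕ → ℕ) (m : ℕ) : X :=
  ∑ j ∈ Finset.range m, S.f (ρ j) x • S.e (ρ j)

/-- Quasi-greedy: `‖G_m(x)‖ ≤ K ‖x‖` uniformly. -/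
def QuasiGreedy (S : SchauderBasisSys X) : Prop :=
  ∃ K : ℝ, ∀ (x : X) (ρ : ℕ → ℕ) (m : ℕ),
    S.IsGreedyOrdering x ρ → ‖S.G x ρ m‖ ≤ K * ‖x‖

/-- Conservative: `‖1_A‖ ≤ Γ ‖1_B‖` whenever `|A| ≤ |B|` and `max A < min B`. -/
def Conservative (S : SchauderBasisSys X) : Prop :=
  ∃ Γ : ℝ, ∀ A B : Finset ℕ, A.card ≤ B.card →
    (∀ i ∈ A, ∀ j ∈ B, i < j) → ‖S.ind A‖ ≤ Γ * ‖S.ind B‖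

/-- Reverse conservative: `‖1_A‖ ≤ Γ ‖1_B‖` whenever `|A| ≤ |B|` and `max B < min A`. -/
def ReverseConservative (S : SchauderBasisSys X) : Prop :=
  ∃ Γ : ℝ, ∀ A B : Finset ℕ, A.card ≤ B.card →
    (∀ i ∈ A, ∀ j ∈ B, j < i) → ‖S.ind A‖ ≤ Γ * ‖S.ind B‖

/-- Partially greedy: `‖x - G_m(x)‖ ≤ C ‖∑_{n ≥ m} e_n^*(x) e_n‖ = C ‖x - P_{[0,m)}(x)‖`. -/
def PartiallyGreedy (S : SchauderBasisSys X) : Prop :=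
  ∃ C : ℝ, ∀ (x : X) (ρ : ℕ → ℕ) (m : ℕ), S.IsGreedyOrdering x ρ →
    ‖x - S.G x ρ m‖ ≤ C * ‖x - S.P (Finset.range m) x‖

/-- Almost greedy: `‖x - G_m(x)‖ ≤ C inf{‖x - P_A(x)‖ : |A| ≤ m}`. -/
def AlmostGreedy (S : SchauderBasisSys X) : Prop :=
  ∃ C : ℝ, ∀ (x : X) (ρ : ℕ → ℕ) (m : ℕ) (A : Finset ℕ), S.IsGreedyOrdering x ρ →
    A.card ≤ m → ‖x - S.G x ρ m‖ ≤ C * ‖x - S.P A x‖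

end SchauderBasisSys

namespace SchauderBasisSys

variable {X : Type*} [NormedAddCommGroup X] [NormedSpace ℝ X]

lemma card_Lam {ρ : ℕ → ℕ} (hρ : Function.Injective ρ) (m : ℕ) : (Lam ρ m).card = m := by
  simp [Lam, Finset.card_image_of_injective _ hρ]

lemma mem_Lam {ρ : ℕ → ℕ} {m i : ℕ} : i ∈ Lam ρ m ↔ ∃ j < m, ρ j = i := by
  simp [Lam]

lemma G_eq_P (S : SchauderBasisSys X) (x : X) {ρ : ℕ → ℕ} (hρ : Function.Injective ρ) (m : ℕ) :
    S.G x ρ m = S.P (Lam ρ m) x := by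
  simp [G, P, Lam, Finset.sum_image hρ.injOn]

lemma f_sum (S : SchauderBasisSys X) (D : Finset ℕ) (c : ℕ → ℝ) (n : ℕ) :
    S.f n (∑ i ∈ D, c i • S.e i) = if n ∈ D then c n else 0 := by
  simp [map_sum, S.biorth]

lemma P_sum (S : SchauderBasisSys X) (A D : Finset ℕ) (c : ℕ → ℝ) :
    S.P A (∑ i ∈ D, c i • S.e i) = ∑ i ∈ A ∩ D, c i • S.e i := by
  simp only [P, f_sum, ite_smul, zero_smul, ← Finset.sum_filter]
  rw [Finset.filter_mem_eq_inter]

lemma f_sub_P (S : SchauderBasisSys X) (F : Finset ℕ) (x : X) (n : ℕ) :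
    S.f n (x - S.P F x) = if n ∈ F then 0 else S.f n x := by
  rw [map_sub, P, f_sum]
  split_ifs <;> simp

/-- The initial projections of a Schauder basis are uniformly bounded. -/
lemma exists_norm_P_range_le [CompleteSpace X] (S : SchauderBasisSys X) :
    ∃ K : ℝ, 0 ≤ K ∧ ∀ (N : ℕ) (x : X), ‖S.P (Finset.range N) x‖ ≤ K * ‖x‖ := by
  let T : ℕ → X →L[ℝ] X := fun N => ∑ n ∈ Finset.range N, (S.f n).smulRight (S.e n)
  have hT : ∀ N x, T N x = S.P (Finset.range N) x := by
    intro N x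
    simp [T, P]
  obtain ⟨K, hK⟩ := banach_steinhaus (g := T) fun x => by
    obtain ⟨C, hC⟩ := (S.expansion x).norm.bddAbove_range
    refine ⟨C, fun N => ?_⟩
    rw [hT]
    exact hC ⟨N, rfl⟩
  refine ⟨K, (norm_nonneg _).trans (hK 0), fun N x => ?_⟩
  rw [← hT]
  exact (T N).le_of_opNorm_le (hK N) x

/-- Nested finite sets can be listed as initial segments of one permutation. -/
lemma exists_perm_Lam {F D : Finset ℕ} (h : F ⊆ D) :
    ∃ σ : Equiv.Perm ℕ, Lam σ F.card = F ∧ Lam σ D.card = D := by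
  set L : List ℕ := F.toList ++ (D \ F).toList with hL
  have hnd : L.Nodup := by
    rw [hL, List.nodup_append']
    refine ⟨F.nodup_toList, (D \ F).nodup_toList, fun a ha hb => ?_⟩
    simp_all
  have hlen : L.length = D.card := by
    simp only [hL, List.length_append, Finset.length_toList]
    rw [add_comm, Finset.card_sdiff_add_card_eq_card h]
  have := Equiv.Perm.isMultiplyPretransitive ℕ L.length
  obtain ⟨σ, hσ⟩ := MulAction.exists_smul_eq (Equiv.Perm ℕ)
    (Fin.valEmbedding : Fin L.length ↪ ℕ) ⟨L.get, List.nodup_iff_injective_get.1 hnd⟩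
  have hσ' : ∀ (i : ℕ) (hi : i < L.length), σ i = L[i] := fun i hi =>
    DFunLike.congr_fun hσ ⟨i, hi⟩
  have hF : ∀ i < F.card, σ i ∈ F := by
    intro i hi
    have hi' : i < F.toList.length := by simpa using hi
    rw [hσ' i (hlen ▸ hi.trans_le (Finset.card_le_card h))]
    simp only [hL, List.getElem_append_left hi']
    exact Finset.mem_toList.1 (List.getElem_mem hi')
  have hD : ∀ i < D.card, σ i ∈ D := by
    intro i hi
    rw [hσ' i (hlen.symm ▸ hi)]
    have hm : L[i]'(hlen.symm ▸ hi) ∈ L := List.getElem_mem _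
    rcases List.mem_append.1 hm with q | q
    · exact h (Finset.mem_toList.1 q)
    · exact (Finset.mem_sdiff.1 (Finset.mem_toList.1 q)).1
  refine ⟨σ, ?_, ?_⟩
  · refine Finset.eq_of_subset_of_card_le (fun i hi => ?_) (card_Lam σ.injective _).ge
    obtain ⟨j, hj, rfl⟩ := mem_Lam.1 hi
    exact hF j hj
  · refine Finset.eq_of_subset_of_card_le (fun i hi => ?_) (card_Lam σ.injective _).ge
    obtain ⟨j, hj, rfl⟩ := mem_Lam.1 hi
    exact hD j hj

/-- Any part of the support of a vector with coordinates `±1` is a greedy set. -/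
lemma exists_isGreedyOrdering_sum (S : SchauderBasisSys X) {F D : Finset ℕ} (h : F ⊆ D)
    {ε : ℕ → ℝ} (hε : ∀ i ∈ D, |ε i| = 1) :
    ∃ ρ, S.IsGreedyOrdering (∑ i ∈ D, ε i • S.e i) ρ ∧ Lam ρ F.card = F ∧
      S.G (∑ i ∈ D, ε i • S.e i) ρ F.card = ∑ i ∈ F, ε i • S.e i := by
  obtain ⟨σ, hF, hD⟩ := exists_perm_Lam h
  refine ⟨σ, ⟨σ.injective, fun n _ => σ.surjective n, fun j k hjk => ?_⟩, hF, ?_⟩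
  · rw [f_sum, f_sum]
    by_cases hk : σ k ∈ D
    · have hk' := hk
      rw [← hD, mem_Lam] at hk'
      obtain ⟨i, hi, hik⟩ := hk'
      rw [σ.injective hik] at hi
      have hj : σ j ∈ D := by
        rw [← hD, mem_Lam]
        exact ⟨j, hjk.trans_lt hi, rfl⟩
      simp [hk, hj, hε]
    · simp [hk]
  · rw [G_eq_P S _ σ.injective, hF, P_sum, Finset.inter_eq_left.2 h]

/-- Deleting finitely many coordinates from a vector preserves greedy sets. -/
lemma IsGreedyOrdering.exists_sub_P {S : SchauderBasisSys X} {x : X} {ρ : ℕ → ℕ}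
    (h : S.IsGreedyOrdering x ρ) (F : Finset ℕ) (m : ℕ) :
    ∃ ρ' k, S.IsGreedyOrdering (x - S.P F x) ρ' ∧ Lam ρ' k = Lam ρ m \ F := by
  classical
  obtain ⟨hinj, hsupp, hmono⟩ := h
  let p : ℕ → Prop := fun j => ρ j ∉ F
  have hp : {j | p j}.Infinite := by
    have hfin : (ρ ⁻¹' (F : Set ℕ)).Finite := F.finite_toSet.preimage hinj.injOn
    exact hfin.infinite_compl
  have hnth : ∀ j, ρ (Nat.nth p j) ∉ F := fun j => Nat.nth_mem_of_infinite hp j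
  refine ⟨ρ ∘ Nat.nth p, Nat.count p m, ⟨hinj.comp (Nat.nth_injective hp), ?_, ?_⟩, ?_⟩
  · intro n hn
    rw [f_sub_P] at hn
    have hnF : n ∉ F := fun q => hn (if_pos q)
    rw [if_neg hnF] at hn
    obtain ⟨j, rfl⟩ := hsupp n hn
    exact ⟨Nat.count p j, congrArg ρ (Nat.nth_count (p := p) hnF)⟩
  · intro j k hjk
    simp only [Function.comp, f_sub_P, hnth, if_false]
    exact hmono _ _ ((Nat.nth_monotone hp) hjk)
  · ext i
    simp only [Finset.mem_sdiff, mem_Lam, Function.comp]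
    constructor
    · rintro ⟨j, hj, rfl⟩
      exact ⟨⟨_, Nat.nth_lt_of_lt_count hj, rfl⟩, hnth j⟩
    · rintro ⟨⟨j, hj, rfl⟩, hF⟩
      exact ⟨Nat.count p j, Nat.count_strict_mono (p := p) hF hj,
        congrArg ρ (Nat.nth_count (p := p) hF)⟩

/-- A bound valid at all vertices `z + ∑ i ∈ B, v i` of a parallelepiped is valid inside it. -/
lemma norm_add_sum_smul_le {ι : Type*} [DecidableEq ι] (v : ι → X) {M : ℝ} (A : Finset ι)
    {c : ι → ℝ} (h0 : ∀ i ∈ A, 0 ≤ c i) (h1 : ∀ i ∈ A, c i ≤ 1) (z : X)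
    (hM : ∀ B ⊆ A, ‖z + ∑ i ∈ B, v i‖ ≤ M) : ‖z + ∑ i ∈ A, c i • v i‖ ≤ M := by
  induction A using Finset.induction_on generalizing z with
  | empty => simpa using hM ∅ le_rfl
  | insert a A ha ih =>
    have h0' : ∀ i ∈ A, 0 ≤ c i := fun i hi => h0 i (Finset.mem_insert_of_mem hi)
    have h1' : ∀ i ∈ A, c i ≤ 1 := fun i hi => h1 i (Finset.mem_insert_of_mem hi)
    have hz := ih h0' h1' z fun B hB => hM B (hB.trans (Finset.subset_insert a A))
    have hza := ih h0' h1' (z + v a) fun B hB => by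
      have := hM (insert a B) (Finset.insert_subset_insert a hB)
      rwa [Finset.sum_insert fun q => ha (hB q), ← add_assoc] at this
    have hball := convex_closedBall (0 : X) M (mem_closedBall_zero_iff.2 hz)
      (mem_closedBall_zero_iff.2 hza) (sub_nonneg.2 (h1 a (Finset.mem_insert_self a A)))
      (h0 a (Finset.mem_insert_self a A)) (by ring)
    rw [mem_closedBall_zero_iff] at hball
    have hcomb : z + ∑ i ∈ insert a A, c i • v i = (1 - c a) • (z + ∑ i ∈ A, c i • v i) +
        c a • (z + v a + ∑ i ∈ A, c i • v i) := by
      rw [Finset.sum_insert ha]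
      module
    rwa [hcomb]

lemma norm_sum_smul_le_of_abs_le {ι : Type*} [DecidableEq ι] (v : ι → X) {M t : ℝ}
    (ht : 0 < t) (A : Finset ι) {c : ι → ℝ} (hc : ∀ i ∈ A, |c i| ≤ t)
    (hM : ∀ B ⊆ A, ‖∑ i ∈ B, v i‖ ≤ M) : ‖∑ i ∈ A, c i • v i‖ ≤ 3 * (t * M) := by
  have hu := norm_add_sum_smul_le v A (c := fun i => (c i / t + 1) / 2) (M := M)
    (fun i hi => by
      have := (abs_le.1 (hc i hi)).1
      have : -1 ≤ c i / t := by rw [le_div_iff₀ ht]; linarith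
      linarith)
    (fun i hi => by
      have := (abs_le.1 (hc i hi)).2
      have : c i / t ≤ 1 := by rw [div_le_iff₀ ht]; linarith
      linarith) 0 (by simpa using hM)
  rw [zero_add] at hu
  have key : ∑ i ∈ A, c i • v i =
      t • ((2 : ℝ) • ∑ i ∈ A, ((c i / t + 1) / 2) • v i - ∑ i ∈ A, v i) := by
    rw [Finset.smul_sum, ← Finset.sum_sub_distrib, Finset.smul_sum]
    refine Finset.sum_congr rfl fun i _ => ?_
    match_scalars
    field_simp
    ring
  rw [key, norm_smul, Real.norm_of_nonneg ht.le]
  have h2 : ‖(2 : ℝ) • ∑ i ∈ A, ((c i / t + 1) / 2) • v i - ∑ i ∈ A, v i‖ ≤ 2 * M + M := by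
    refine (norm_sub_le _ _).trans (add_le_add ?_ (hM A le_rfl))
    rw [norm_smul, Real.norm_of_nonneg zero_le_two]
    linarith
  calc _ ≤ t * (2 * M + M) := mul_le_mul_of_nonneg_left h2 ht.le
    _ = _ := by ring

/-- Abel's inequality for nonnegative, nondecreasing coefficients. -/
lemma norm_sum_range_smul_le (v : ℕ → X) {c : ℕ → ℝ} {M : ℝ} (n : ℕ) (h0 : 0 ≤ c 0)
    (hc : ∀ j < n, c j ≤ c (j + 1)) (hM : ∀ k, ‖∑ j ∈ Finset.range k, v j‖ ≤ M) :
    ‖∑ j ∈ Finset.range (n + 1), c j • v j‖ ≤ 2 * (c n * M) := by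
  have hM0 : 0 ≤ M := (norm_nonneg _).trans (hM 0)
  have key : 0 ≤ c n ∧ ‖c n • ∑ j ∈ Finset.range (n + 1), v j -
      ∑ j ∈ Finset.range (n + 1), c j • v j‖ ≤ c n * M := by
    induction n with
    | zero => simpa using ⟨h0, mul_nonneg h0 hM0⟩
    | succ n ih =>
      obtain ⟨hn, ih⟩ := ih fun j hj => hc j (hj.trans n.lt_succ_self)
      have hstep := hc n n.lt_succ_self
      refine ⟨hn.trans hstep, ?_⟩
      have hsplit : c (n + 1) • ∑ j ∈ Finset.range (n + 1 + 1), v j -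
          ∑ j ∈ Finset.range (n + 1 + 1), c j • v j =
          (c (n + 1) - c n) • ∑ j ∈ Finset.range (n + 1), v j +
          (c n • ∑ j ∈ Finset.range (n + 1), v j - ∑ j ∈ Finset.range (n + 1), c j • v j) := by
        rw [Finset.sum_range_succ _ (n + 1), Finset.sum_range_succ _ (n + 1)]
        module
      rw [hsplit]
      refine (norm_add_le _ _).trans ?_
      rw [norm_smul, Real.norm_of_nonneg (sub_nonneg.2 hstep)]
      have := mul_le_mul_of_nonneg_left (hM (n + 1)) (sub_nonneg.2 hstep)
      linarith
  have h1 : ‖c n • ∑ j ∈ Finset.range (n + 1), v j‖ ≤ c n * M := by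
    rw [norm_smul, Real.norm_of_nonneg key.1]
    exact mul_le_mul_of_nonneg_left (hM _) key.1
  have h2 := norm_sub_le (c n • ∑ j ∈ Finset.range (n + 1), v j)
    (c n • ∑ j ∈ Finset.range (n + 1), v j - ∑ j ∈ Finset.range (n + 1), c j • v j)
  rw [sub_sub_cancel] at h2
  linarith [key.2]

lemma QuasiGreedy.exists_nonneg {S : SchauderBasisSys X} (h : S.QuasiGreedy) :
    ∃ K : ℝ, 0 ≤ K ∧ ∀ (x : X) (ρ : ℕ → ℕ) (m : ℕ),
      S.IsGreedyOrdering x ρ → ‖S.G x ρ m‖ ≤ K * ‖x‖ := by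
  obtain ⟨K, hK⟩ := h
  exact ⟨max K 0, le_max_right _ _, fun x ρ m hρ => (hK x ρ m hρ).trans
    (mul_le_mul_of_nonneg_right (le_max_left _ _) (norm_nonneg _))⟩

lemma Conservative.exists_nonneg {S : SchauderBasisSys X} (h : S.Conservative) :
    ∃ Γ : ℝ, 0 ≤ Γ ∧ ∀ A B : Finset ℕ, A.card ≤ B.card →
      (∀ i ∈ A, ∀ j ∈ B, i < j) → ‖S.ind A‖ ≤ Γ * ‖S.ind B‖ := by
  obtain ⟨K, hK⟩ := h
  exact ⟨max K 0, le_max_right _ _, fun A B h1 h2 => (hK A B h1 h2).trans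
    (mul_le_mul_of_nonneg_right (le_max_left _ _) (norm_nonneg _))⟩

section QuasiGreedyBounds

variable {S : SchauderBasisSys X} {K : ℝ}

/-- Removing signs: `‖1_D‖ ≤ 2K ‖1_{εD}‖`. -/
lemma norm_ind_le_of_quasiGreedy
    (hK : ∀ (x : X) (ρ : ℕ → ℕ) (m : ℕ), S.IsGreedyOrdering x ρ → ‖S.G x ρ m‖ ≤ K * ‖x‖)
    (D : Finset ℕ) {ε : ℕ → ℝ} (hε : ∀ i ∈ D, |ε i| = 1) :
    ‖S.ind D‖ ≤ 2 * (K * ‖∑ i ∈ D, ε i • S.e i‖) := by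
  classical
  have hsub : ∀ F ⊆ D, ‖∑ i ∈ F, ε i • S.e i‖ ≤ K * ‖∑ i ∈ D, ε i • S.e i‖ := by
    intro F hF
    obtain ⟨ρ, hρ, -, hG⟩ := S.exists_isGreedyOrdering_sum hF hε
    simpa only [hG] using hK _ ρ F.card hρ
  have hsplit : S.ind D = ∑ i ∈ D with ε i = 1, ε i • S.e i -
      ∑ i ∈ D with ¬ ε i = 1, ε i • S.e i := by
    rw [ind, ← Finset.sum_filter_add_sum_filter_not D (fun i => ε i = 1), sub_eq_add_neg,
      ← Finset.sum_neg_distrib]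
    congr 1
    · refine Finset.sum_congr rfl fun i hi => ?_
      rw [(Finset.mem_filter.1 hi).2, one_smul]
    · refine Finset.sum_congr rfl fun i hi => ?_
      obtain ⟨hiD, hi1⟩ := Finset.mem_filter.1 hi
      rw [(eq_or_eq_neg_of_abs_eq (hε i hiD)).resolve_left hi1, neg_smul, one_smul, neg_neg]
  rw [hsplit]
  refine (norm_sub_le _ _).trans ?_
  linarith [hsub _ (Finset.filter_subset (fun i => ε i = 1) D),
    hsub _ (Finset.filter_subset (fun i => ¬ ε i = 1) D)]

/-- Truncation: `|e_{ρ(n)}^*(y)| ‖1_Λ‖ ≤ 4K² ‖y‖` for the greedy set `Λ` of size `n + 1`. -/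
lemma abs_mul_norm_ind_Lam_le_of_quasiGreedy (hK0 : 0 ≤ K)
    (hK : ∀ (x : X) (ρ : ℕ → ℕ) (m : ℕ), S.IsGreedyOrdering x ρ → ‖S.G x ρ m‖ ≤ K * ‖x‖)
    {y : X} {ρ : ℕ → ℕ} (hρ : S.IsGreedyOrdering y ρ) (n : ℕ) (hn : S.f (ρ n) y ≠ 0) :
    |S.f (ρ n) y| * ‖S.ind (Lam ρ (n + 1))‖ ≤ 4 * K ^ 2 * ‖y‖ := by
  set t := |S.f (ρ n) y| with ht
  have htpos : 0 < t := abs_pos.2 hn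
  have hpos : ∀ j ≤ n, 0 < |S.f (ρ j) y| := fun j hj => htpos.trans_le (hρ.2.2 j n hj)
  have habel := norm_sum_range_smul_le (fun j => S.f (ρ j) y • S.e (ρ j))
    (c := fun j => t / |S.f (ρ j) y|) n (by positivity)
    (fun j hj => div_le_div_of_nonneg_left htpos.le (hpos (j + 1) hj) (hρ.2.2 _ _ j.le_succ))
    fun k => hK y ρ k hρ
  rw [← ht, div_self htpos.ne', one_mul] at habel
  let ε : ℕ → ℝ := fun i => S.f i y / |S.f i y|
  have hsum : ∑ j ∈ Finset.range (n + 1), (t / |S.f (ρ j) y|) • S.f (ρ j) y • S.e (ρ j) =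
      t • ∑ i ∈ Lam ρ (n + 1), ε i • S.e i := by
    rw [Lam, Finset.sum_image hρ.1.injOn, Finset.smul_sum]
    refine Finset.sum_congr rfl fun j _ => ?_
    simp only [ε, smul_smul]
    congr 1
    ring
  rw [hsum, norm_smul, Real.norm_of_nonneg htpos.le] at habel
  have hε : ∀ i ∈ Lam ρ (n + 1), |ε i| = 1 := by
    intro i hi
    obtain ⟨j, hj, rfl⟩ := mem_Lam.1 hi
    simp only [ε, abs_div, abs_abs]
    exact div_self (hpos j (Nat.lt_succ_iff.1 hj)).ne'
  have hind := norm_ind_le_of_quasiGreedy hK _ hε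
  calc t * ‖S.ind (Lam ρ (n + 1))‖
      ≤ t * (2 * (K * ‖∑ i ∈ Lam ρ (n + 1), ε i • S.e i‖)) :=
        mul_le_mul_of_nonneg_left hind htpos.le
    _ = 2 * K * (t * ‖∑ i ∈ Lam ρ (n + 1), ε i • S.e i‖) := by ring
    _ ≤ 2 * K * (2 * (K * ‖y‖)) := mul_le_mul_of_nonneg_left habel (by positivity)
    _ = 4 * K ^ 2 * ‖y‖ := by ring

end QuasiGreedyBounds

/-- Coordinates on the left of a greedy set and dominated by it contribute a bounded amount. -/
lemma exists_norm_sum_le_of_quasiGreedy_of_conservative {S : SchauderBasisSys X}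
    (hq : S.QuasiGreedy) (hc : S.Conservative) :
    ∃ C : ℝ, 0 ≤ C ∧ ∀ (y : X) (ρ : ℕ → ℕ) (k : ℕ) (A : Finset ℕ) (c : ℕ → ℝ),
      S.IsGreedyOrdering y ρ → A.card ≤ k → (∀ i ∈ A, ∀ j ∈ Lam ρ k, i < j) →
      (∀ i ∈ A, ∀ j ∈ Lam ρ k, |c i| ≤ |S.f j y|) →
      ‖∑ i ∈ A, c i • S.e i‖ ≤ C * ‖y‖ := by
  classical
  obtain ⟨K, hK0, hK⟩ := hq.exists_nonneg
  obtain ⟨Γ, hΓ0, hΓ⟩ := hc.exists_nonneg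
  refine ⟨3 * (Γ * (4 * K ^ 2)), by positivity, fun y ρ k A c hρ hcard hlt hdom => ?_⟩
  have htriv : (∀ i ∈ A, c i = 0) → ‖∑ i ∈ A, c i • S.e i‖ ≤ 3 * (Γ * (4 * K ^ 2)) * ‖y‖ := by
    intro h
    rw [Finset.sum_eq_zero fun i hi => by rw [h i hi, zero_smul], norm_zero]
    positivity
  rcases k with _ | n
  · rw [Nat.le_zero, Finset.card_eq_zero] at hcard
    exact htriv (by simp [hcard])
  have hmem : ρ n ∈ Lam ρ (n + 1) := mem_Lam.2 ⟨n, n.lt_succ_self, rfl⟩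
  by_cases hn : S.f (ρ n) y = 0
  · refine htriv fun i hi => ?_
    simpa [hn] using hdom i hi _ hmem
  have htrunc := abs_mul_norm_ind_Lam_le_of_quasiGreedy hK0 hK hρ n hn
  have hsum := norm_sum_smul_le_of_abs_le S.e (abs_pos.2 hn) A (fun i hi => hdom i hi _ hmem)
    (M := Γ * ‖S.ind (Lam ρ (n + 1))‖) fun B hB =>
      hΓ B _ (by rw [card_Lam hρ.1]; exact (Finset.card_le_card hB).trans hcard)
        fun i hi => hlt i (hB hi)
  have := mul_le_mul_of_nonneg_left htrunc hΓ0
  linarith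

/-- Greedy sums of a quasi-greedy conservative basis compete with every projection `P_F` whose
indices outside the greedy set are no more numerous than, and to the left of, the remaining
greedy indices. -/
lemma exists_norm_sub_G_le_of_quasiGreedy_of_conservative {S : SchauderBasisSys X}
    (hq : S.QuasiGreedy) (hc : S.Conservative) :
    ∃ C : ℝ, ∀ (x : X) (ρ : ℕ → ℕ) (m : ℕ) (F : Finset ℕ), S.IsGreedyOrdering x ρ →
      F.card ≤ m → (∀ i ∈ F \ Lam ρ m, ∀ j ∈ Lam ρ m \ F, i < j) →
      ‖x - S.G x ρ m‖ ≤ C * ‖x - S.P F x‖ := by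
  obtain ⟨D, hD0, hD⟩ := exists_norm_sum_le_of_quasiGreedy_of_conservative hq hc
  obtain ⟨K, hK⟩ := hq
  refine ⟨1 + K + D, fun x ρ m F hρ hcard hlt => ?_⟩
  set Λ := Lam ρ m with hΛ
  obtain ⟨ρ', k, hρ', hLam⟩ := hρ.exists_sub_P F m
  rw [← hΛ] at hLam
  have hk : k = (Λ \ F).card := by rw [← hLam, card_Lam hρ'.1]
  have hsdiff : (F \ Λ).card ≤ k := by
    rw [hk]
    refine (Finset.card_sdiff_le_card_sdiff_iff).2 ?_
    rwa [hΛ, card_Lam hρ.1]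
  have hP : ‖S.P (F \ Λ) x‖ ≤ D * ‖x - S.P F x‖ := by
    refine hD _ ρ' k _ (fun i => S.f i x) hρ' hsdiff (hLam ▸ hlt) fun i hi j hj => ?_
    rw [hLam, Finset.mem_sdiff] at hj
    rw [f_sub_P, if_neg hj.2]
    obtain ⟨b, hb, rfl⟩ := mem_Lam.1 hj.1
    by_cases hi0 : S.f i x = 0
    · simp [hi0]
    obtain ⟨a, rfl⟩ := hρ.2.1 i hi0
    refine hρ.2.2 b a (not_lt.1 fun hab => (Finset.mem_sdiff.1 hi).2 ?_)
    exact mem_Lam.2 ⟨a, hab.trans hb, rfl⟩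
  have hG : S.G (x - S.P F x) ρ' k = S.P (Λ \ F) x := by
    rw [G_eq_P S _ hρ'.1, hLam]
    refine Finset.sum_congr rfl fun i hi => ?_
    rw [f_sub_P, if_neg (Finset.mem_sdiff.1 hi).2]
  have hGle := hK _ ρ' k hρ'
  rw [hG] at hGle
  have hsplit : x - S.G x ρ m = (x - S.P F x) - S.P (Λ \ F) x + S.P (F \ Λ) x := by
    have h1 : S.P (Λ \ F) x + S.P (Λ ∩ F) x = S.P Λ x := by
      rw [add_comm]; exact Finset.sum_inter_add_sum_sdiff Λ F _
    have h2 : S.P (F \ Λ) x + S.P (Λ ∩ F) x = S.P F x := by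
      rw [add_comm, Finset.inter_comm]; exact Finset.sum_inter_add_sum_sdiff F Λ _
    rw [G_eq_P S _ hρ.1, ← h1, ← h2]
    abel
  rw [hsplit]
  refine (norm_add_le _ _).trans ?_
  linarith [norm_sub_le (x - S.P F x) (S.P (Λ \ F) x)]

lemma PartiallyGreedy.quasiGreedy [CompleteSpace X] {S : SchauderBasisSys X}
    (h : S.PartiallyGreedy) : S.QuasiGreedy := by
  obtain ⟨C, hC⟩ := h
  obtain ⟨K, hK0, hK⟩ := S.exists_norm_P_range_le
  refine ⟨1 + max C 0 * (1 + K), fun x ρ m hρ => ?_⟩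
  have h1 : ‖x - S.P (Finset.range m) x‖ ≤ (1 + K) * ‖x‖ := by
    linarith [norm_sub_le x (S.P (Finset.range m) x), hK m x]
  have h2 : ‖x - S.G x ρ m‖ ≤ max C 0 * ((1 + K) * ‖x‖) :=
    (hC x ρ m hρ).trans (mul_le_mul (le_max_left _ _) h1 (norm_nonneg _) (le_max_right _ _))
  have h3 := norm_sub_le x (x - S.G x ρ m)
  rw [sub_sub_cancel] at h3
  linarith

/-- An initial part of a finite set of indices has controlled indicator. -/
lemma exists_subset_card_eq_norm_ind_le {S : SchauderBasisSys X} {K : ℝ}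
    (hK : ∀ (N : ℕ) (x : X), ‖S.P (Finset.range N) x‖ ≤ K * ‖x‖) (B : Finset ℕ) {k : ℕ}
    (hk : k ≤ B.card) : ∃ B' ⊆ B, B'.card = k ∧ ‖S.ind B'‖ ≤ K * ‖S.ind B‖ := by
  have hex : ∃ N, (Finset.range N ∩ B).card = k := by
    by_contra! hne
    have hlt : ∀ N, (Finset.range N ∩ B).card < k := by
      intro N
      induction N with
      | zero => exact lt_of_le_of_ne (by simp) (hne 0)
      | succ N ih =>
        refine lt_of_le_of_ne ?_ (hne (N + 1))
        have hsub : Finset.range (N + 1) ∩ B ⊆ insert N (Finset.range N ∩ B) := by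
          intro i
          simp only [Finset.mem_inter, Finset.mem_range, Finset.mem_insert]
          grind
        exact (Finset.card_le_card hsub).trans ((Finset.card_insert_le _ _).trans ih)
    obtain ⟨N, hN⟩ := B.exists_nat_subset_range
    have := hlt N
    rw [Finset.inter_eq_right.2 hN] at this
    omega
  obtain ⟨N, hN⟩ := hex
  refine ⟨_, Finset.inter_subset_right, hN, ?_⟩
  have hP := S.P_sum (Finset.range N) B fun _ => 1
  simp only [one_smul] at hP
  rw [ind, ← hP]
  exact hK N _

lemma PartiallyGreedy.conservative [CompleteSpace X] {S : SchauderBasisSys X}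
    (h : S.PartiallyGreedy) : S.Conservative := by
  obtain ⟨C, hC⟩ := h
  obtain ⟨K, hK0, hK⟩ := S.exists_norm_P_range_le
  refine ⟨max C 0 * K, fun A B hcard hlt => ?_⟩
  obtain ⟨B', hB', hB'card, hB'le⟩ := exists_subset_card_eq_norm_ind_le hK B hcard
  obtain ⟨m, hAm, hmB⟩ : ∃ m, A ⊆ Finset.range m ∧ Disjoint (Finset.range m) B' := by
    refine ⟨A.sup (· + 1), fun i hi => ?_, ?_⟩
    · exact Finset.mem_range.2 (Finset.le_sup (f := (· + 1)) hi)
    · rw [Finset.disjoint_left]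
      intro i hi hiB
      obtain ⟨a, ha, hia⟩ := (Finset.lt_sup_iff).1 (Finset.mem_range.1 hi)
      have := hlt a ha i (hB' hiB)
      omega
  have hdisj : Disjoint (Finset.range m \ A) B' := hmB.mono_left Finset.sdiff_subset
  have hFcard : ((Finset.range m \ A) ∪ B').card = m := by
    rw [Finset.card_union_of_disjoint hdisj, hB'card, Finset.card_sdiff_add_card_eq_card hAm,
      Finset.card_range]
  have hFD : (Finset.range m \ A) ∪ B' ⊆ Finset.range m ∪ B' :=
    Finset.union_subset_union_left Finset.sdiff_subset
  obtain ⟨ρ, hρ, -, hG⟩ := S.exists_isGreedyOrdering_sum hFD (ε := fun _ => 1) (by simp)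
  have hle := hC _ ρ m hρ
  rw [hFcard] at hG
  rw [hG, P_sum, Finset.inter_eq_left.2 Finset.subset_union_left] at hle
  simp only [one_smul] at hle
  rw [Finset.sum_union hmB, Finset.sum_union hdisj, add_sub_cancel_left,
    add_sub_add_right_eq_sub, ← Finset.sum_sdiff hAm, add_sub_cancel_left] at hle
  calc ‖S.ind A‖ ≤ C * ‖S.ind B'‖ := hle
    _ ≤ max C 0 * ‖S.ind B'‖ :=
      mul_le_mul_of_nonneg_right (le_max_left _ _) (norm_nonneg _)
    _ ≤ max C 0 * (K * ‖S.ind B‖) := mul_le_mul_of_nonneg_left hB'le (le_max_right _ _)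
    _ = max C 0 * K * ‖S.ind B‖ := by ring

end SchauderBasisSys

open SchauderBasisSys

/-- For a Schauder basis of a real Banach space, the following are
equivalent: (a) the basis is partially greedy; (b) it is quasi-greedy and conservative;
(c) there is a constant `C` with `‖x - G_m(x)‖ ≤ C σ̃^L_m(x)` for all `x`, `m` and all
greedy orderings, where `σ̃^L_m(x)` is the infimum of `‖x - P_A(x)‖` over finite `A`
with `|A| ≤ m` and `max A < α_m(x) = min Λ_m(x)`. -/
theorem stmt_0 {X : Type*} [NormedAddCommGroup X] [NormedSpace ℝ X] [CompleteSpace X]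
    (S : SchauderBasisSys X) :
    List.TFAE
      [S.PartiallyGreedy,
       S.QuasiGreedy ∧ S.Conservative,
       ∃ C : ℝ, ∀ (x : X) (ρ : ℕ → ℕ) (m : ℕ) (A : Finset ℕ),
         S.IsGreedyOrdering x ρ → A.card ≤ m →
         (∀ i ∈ A, ∀ j ∈ Lam ρ m, i < j) →
         ‖x - S.G x ρ m‖ ≤ C * ‖x - S.P A x‖] := by
  tfae_have 1 → 2 := fun h => ⟨h.quasiGreedy, h.conservative⟩
  tfae_have 2 → 1 := by
    rintro ⟨hq, hc⟩
    obtain ⟨C, hC⟩ := exists_norm_sub_G_le_of_quasiGreedy_of_conservative hq hc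
    refine ⟨C, fun x ρ m hρ => hC x ρ m _ hρ (Finset.card_range m).le fun i hi j hj => ?_⟩
    simp only [Finset.mem_sdiff, Finset.mem_range] at hi hj
    omega
  tfae_have 2 → 3 := by
    rintro ⟨hq, hc⟩
    obtain ⟨C, hC⟩ := exists_norm_sub_G_le_of_quasiGreedy_of_conservative hq hc
    exact ⟨C, fun x ρ m A hρ hcard hlt => hC x ρ m A hρ hcard fun i hi j hj =>
      hlt i (Finset.mem_sdiff.1 hi).1 j (Finset.mem_sdiff.1 hj).1⟩
  tfae_have 3 → 2 := by
    rintro ⟨C, hC⟩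
    refine ⟨⟨1 + C, fun x ρ m hρ => ?_⟩, ⟨C, fun A B hcard hlt => ?_⟩⟩
    · have h1 := hC x ρ m ∅ hρ (Nat.zero_le m) (by simp)
      have h2 := norm_sub_le x (x - S.G x ρ m)
      simp only [P, Finset.sum_empty, sub_zero] at h1
      rw [sub_sub_cancel] at h2
      linarith
    · have hdisj : Disjoint A B :=
        Finset.disjoint_left.2 fun i hA hB => (hlt i hA i hB).false
      obtain ⟨ρ, hρ, hLam, hG⟩ := S.exists_isGreedyOrdering_sum
        (Finset.subset_union_right : B ⊆ A ∪ B) (ε := fun _ => 1) (by simp)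
      have hle := hC _ ρ B.card A hρ hcard (by rwa [hLam])
      rw [hG, P_sum, Finset.inter_eq_left.2 Finset.subset_union_left] at hle
      simp only [one_smul] at hle
      rwa [Finset.sum_union hdisj, add_sub_cancel_right, add_sub_cancel_left] at hle
  tfae_finish
end

section
/- For n ≥ 1 let F_n = {A ⊂ ℕ finite : |A| ≤ n! and n! ≤ min A} and F = ⋃_{n≥1} F_n, and on the space c00 of finitely supported real sequences define ‖x‖ = sup{Σ_{i∈A}|x_i| : A ∈ F}. Then ‖·‖ is a norm on c00 for which the canonical unit vector basis is 1-unconditional and 1-conservative (‖1_A‖ ≤ ‖1_B‖ whenever A, B are finite with |A| ≤ |B| and max A < min B); moreover ‖1_{[1,n!]}‖ = (n−1)! and ‖1_{[n!+1,2n!]}‖ = n! for every n ≥ 2, so the canonical basis is not democratic (there is no constant Γ with ‖1_A‖ ≤ Γ‖1_B‖ for all finite A, B with |A| ≤ |B|). -/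
/-- The family `F = ⋃_{n ≥ 1} F_n`, where `F_n` consists of the finite sets `A` with
`|A| ≤ n!` whose least element is at least `n!`. Here `c₀₀` is modelled as `ℕ →₀ ℝ` with
coordinates indexed from `0`, corresponding to the paper's indices `1, 2, …`; so the
condition `n! ≤ min A` (in paper indexing) reads `n! ≤ i + 1` for all `i ∈ A`. -/
def FF : Set (Finset ℕ) :=
  {A | ∃ n : ℕ, 1 ≤ n ∧ A.card ≤ n.factorial ∧ ∀ i ∈ A, n.factorial ≤ i + 1}

/-- The norm `‖x‖ = sup{∑_{i ∈ A} |x_i| : A ∈ F}` on finitely supported sequences. -/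
noncomputable def normF (x : ℕ →₀ ℝ) : ℝ :=
  sSup {r : ℝ | ∃ A ∈ FF, r = ∑ i ∈ A, |x i|}

/-- The indicator vector `1_A` in `c₀₀`. -/
noncomputable def indF (A : Finset ℕ) : ℕ →₀ ℝ :=
  ∑ i ∈ A, Finsupp.single i (1 : ℝ)

theorem empty_mem_FF : ∅ ∈ FF := ⟨1, le_rfl, by simp, by simp⟩

theorem singleton_mem_FF (i : ℕ) : {i} ∈ FF := ⟨1, le_rfl, by simp, by simp⟩

theorem sum_abs_le_sum_support (x : ℕ →₀ ℝ) (A : Finset ℕ) :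
    ∑ i ∈ A, |x i| ≤ ∑ i ∈ x.support, |x i| := by
  rw [← Finset.sum_filter_of_ne (s := A) (p := fun i => x i ≠ 0) (by simp)]
  refine Finset.sum_le_sum_of_subset_of_nonneg (fun i hi => ?_) fun i _ _ => abs_nonneg _
  simpa using (Finset.mem_filter.1 hi).2

theorem sum_abs_le_normF (x : ℕ →₀ ℝ) {A : Finset ℕ} (hA : A ∈ FF) :
    ∑ i ∈ A, |x i| ≤ normF x := by
  refine le_csSup ⟨∑ i ∈ x.support, |x i|, ?_⟩ ⟨A, hA, rfl⟩
  rintro r ⟨B, -, rfl⟩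
  exact sum_abs_le_sum_support x B

theorem normF_le {x : ℕ →₀ ℝ} {r : ℝ} (h : ∀ A ∈ FF, ∑ i ∈ A, |x i| ≤ r) : normF x ≤ r := by
  refine csSup_le ⟨_, ∅, empty_mem_FF, rfl⟩ ?_
  rintro _ ⟨A, hA, rfl⟩
  exact h A hA

theorem normF_nonneg (x : ℕ →₀ ℝ) : 0 ≤ normF x := by
  simpa using sum_abs_le_normF x empty_mem_FF

theorem abs_apply_le_normF (x : ℕ →₀ ℝ) (i : ℕ) : |x i| ≤ normF x := by
  simpa using sum_abs_le_normF x (singleton_mem_FF i)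

theorem normF_eq_zero_iff (x : ℕ →₀ ℝ) : normF x = 0 ↔ x = 0 := by
  constructor
  · intro h
    ext i
    have := abs_apply_le_normF x i
    rw [h] at this
    simpa using this
  · rintro rfl
    exact le_antisymm (normF_le fun A _ => by simp) (normF_nonneg _)

theorem normF_mono {x y : ℕ →₀ ℝ} (h : ∀ i, |x i| ≤ |y i|) : normF x ≤ normF y :=
  normF_le fun _ hA => (Finset.sum_le_sum fun i _ => h i).trans (sum_abs_le_normF y hA)

theorem normF_add_le (x y : ℕ →₀ ℝ) : normF (x + y) ≤ normF x + normF y := by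
  refine normF_le fun A hA => ?_
  calc ∑ i ∈ A, |(x + y) i| ≤ ∑ i ∈ A, (|x i| + |y i|) :=
        Finset.sum_le_sum fun i _ => abs_add_le _ _
    _ = ∑ i ∈ A, |x i| + ∑ i ∈ A, |y i| := Finset.sum_add_distrib
    _ ≤ normF x + normF y := add_le_add (sum_abs_le_normF x hA) (sum_abs_le_normF y hA)

theorem normF_smul_le (c : ℝ) (x : ℕ →₀ ℝ) : normF (c • x) ≤ |c| * normF x := by
  refine normF_le fun A hA => ?_
  simp only [Finsupp.smul_apply, smul_eq_mul, abs_mul, ← Finset.mul_sum]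
  exact mul_le_mul_of_nonneg_left (sum_abs_le_normF x hA) (abs_nonneg c)

theorem normF_smul (c : ℝ) (x : ℕ →₀ ℝ) : normF (c • x) = |c| * normF x := by
  refine le_antisymm (normF_smul_le c x) ?_
  rcases eq_or_ne c 0 with rfl | hc
  · simpa using normF_nonneg 0
  · have h := normF_smul_le c⁻¹ (c • x)
    rwa [inv_smul_smul₀ hc, abs_inv, inv_mul_eq_div, le_div_iff₀' (abs_pos.2 hc)] at h

theorem indF_apply (A : Finset ℕ) (i : ℕ) : indF A i = if i ∈ A then 1 else 0 := by
  simp [indF, Finsupp.finsetSum_apply, Finsupp.single_apply]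

theorem sum_abs_indF (A B : Finset ℕ) : ∑ i ∈ A, |indF B i| = ((A ∩ B).card : ℝ) := by
  simp [indF_apply, apply_ite abs]

theorem normF_indF_le {B : Finset ℕ} {r : ℝ} (h : ∀ A ∈ FF, ((A ∩ B).card : ℝ) ≤ r) :
    normF (indF B) ≤ r :=
  normF_le fun A hA => (sum_abs_indF A B).trans_le (h A hA)

theorem card_le_normF_indF {A B : Finset ℕ} (hA : A ∈ FF) (hAB : A ⊆ B) :
    (A.card : ℝ) ≤ normF (indF B) := by
  have h := sum_abs_le_normF (indF B) hA
  rwa [sum_abs_indF, Finset.inter_eq_left.2 hAB] at h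

/-- The canonical basis is `1`-conservative for `normF`. -/
theorem normF_indF_le_of_lt {A B : Finset ℕ} (hcard : A.card ≤ B.card)
    (hlt : ∀ i ∈ A, ∀ j ∈ B, i < j) : normF (indF A) ≤ normF (indF B) := by
  refine normF_indF_le ?_
  rintro C ⟨n, hn, hCcard, hC⟩
  rcases (C ∩ A).eq_empty_or_nonempty with h | ⟨i, hi⟩
  · simpa [h] using normF_nonneg _
  · obtain ⟨hiC, hiA⟩ := Finset.mem_inter.1 hi
    obtain ⟨D, hDB, hD⟩ := Finset.exists_subset_card_eq
      ((Finset.card_le_card (Finset.inter_subset_right (s₁ := C))).trans hcard)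
    rw [← hD]
    refine card_le_normF_indF ⟨n, hn, ?_, fun j hj => ?_⟩ hDB
    · exact hD ▸ (Finset.card_le_card Finset.inter_subset_left).trans hCcard
    · have := hC i hiC
      have := hlt i hiA j (hDB hj)
      omega

theorem normF_indF_range_factorial {n : ℕ} (hn : 2 ≤ n) :
    normF (indF (Finset.range n.factorial)) = (n - 1).factorial := by
  obtain ⟨m, rfl⟩ : ∃ m, n = m + 1 := ⟨n - 1, by omega⟩
  rw [Nat.add_sub_cancel]
  have hpos := m.factorial_pos
  apply le_antisymm
  · refine normF_indF_le ?_
    rintro A ⟨k, -, hAcard, hA⟩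
    norm_cast
    rcases Nat.lt_or_ge m k with hk | hk
    · have hfac : (m + 1).factorial ≤ k.factorial := Nat.factorial_le hk
      refine le_trans (Finset.card_le_one.2 fun a ha b hb => ?_) hpos
      simp only [Finset.mem_inter, Finset.mem_range] at ha hb
      have := hA a ha.1
      have := hA b hb.1
      omega
    · exact (Finset.card_le_card Finset.inter_subset_left).trans
        (hAcard.trans (Nat.factorial_le hk))
  · have hfac : 2 * m.factorial ≤ (m + 1).factorial := by
      rw [Nat.factorial_succ]
      exact Nat.mul_le_mul_right _ hn
    have h := card_le_normF_indF
      (A := Finset.Ico (m.factorial - 1) (m.factorial - 1 + m.factorial))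
      (B := Finset.range (m + 1).factorial)
      ⟨m, by omega, by simp, fun i hi => by rw [Finset.mem_Ico] at hi; omega⟩
      fun i hi => by rw [Finset.mem_Ico] at hi; rw [Finset.mem_range]; omega
    simpa using h

theorem normF_indF_Ico_factorial {n : ℕ} (hn : 1 ≤ n) :
    normF (indF (Finset.Ico n.factorial (2 * n.factorial))) = n.factorial := by
  have hcard : (Finset.Ico n.factorial (2 * n.factorial)).card = n.factorial := by
    rw [Nat.card_Ico]
    omega
  apply le_antisymm
  · refine normF_indF_le fun A _ => ?_
    exact_mod_cast (Finset.card_le_card Finset.inter_subset_right).trans hcard.le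
  · have h := card_le_normF_indF
      (A := Finset.Ico n.factorial (2 * n.factorial)) ⟨n, hn, hcard.le, fun i hi => by
        rw [Finset.mem_Ico] at hi; omega⟩ subset_rfl
    rwa [hcard] at h

theorem not_democratic_normF :
    ¬ ∃ Γ : ℝ, ∀ A B : Finset ℕ, A.card ≤ B.card →
        normF (indF A) ≤ Γ * normF (indF B) := by
  rintro ⟨Γ, hΓ⟩
  obtain ⟨m, hm⟩ := exists_nat_gt Γ
  have h := hΓ (Finset.Ico (m + 2).factorial (2 * (m + 2).factorial))
    (Finset.range (m + 2).factorial) (by rw [Nat.card_Ico, Finset.card_range]; omega)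
  rw [normF_indF_Ico_factorial (by omega), normF_indF_range_factorial (by omega),
    show m + 2 - 1 = m + 1 from rfl, Nat.factorial_succ (m + 1), Nat.cast_mul] at h
  have hle := le_of_mul_le_mul_right h (by exact_mod_cast (m + 1).factorial_pos)
  push_cast at hle
  linarith

/-- `normF` is a norm on `c₀₀` for which the canonical basis is
`1`-unconditional and `1`-conservative; moreover `‖1_{[1,n!]}‖ = (n-1)!` and
`‖1_{[n!+1,2n!]}‖ = n!` for `n ≥ 2` (in paper indexing; here `[1,n!]` is
`Finset.range n!` and `[n!+1,2n!]` is `Finset.Ico n! (2n!)`), so the canonical basis is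
not democratic. -/
theorem stmt_2 :
    (∀ x : ℕ →₀ ℝ, normF x = 0 ↔ x = 0) ∧
    (∀ (c : ℝ) (x : ℕ →₀ ℝ), normF (c • x) = |c| * normF x) ∧
    (∀ x y : ℕ →₀ ℝ, normF (x + y) ≤ normF x + normF y) ∧
    (∀ x y : ℕ →₀ ℝ, (∀ i : ℕ, |x i| ≤ |y i|) → normF x ≤ normF y) ∧
    (∀ A B : Finset ℕ, A.card ≤ B.card → (∀ i ∈ A, ∀ j ∈ B, i < j) →
      normF (indF A) ≤ normF (indF B)) ∧
    (∀ n : ℕ, 2 ≤ n →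
      normF (indF (Finset.range n.factorial)) = (n - 1).factorial ∧
      normF (indF (Finset.Ico n.factorial (2 * n.factorial))) = n.factorial) ∧
    ¬ ∃ Γ : ℝ, ∀ A B : Finset ℕ, A.card ≤ B.card →
        normF (indF A) ≤ Γ * normF (indF B) := by
  exact ⟨normF_eq_zero_iff, normF_smul, normF_add_le, fun _ _ => normF_mono,
    fun _ _ => normF_indF_le_of_lt,
    fun _ hn => ⟨normF_indF_range_factorial hn, normF_indF_Ico_factorial (by omega)⟩,
    not_democratic_normF⟩
end

section
/- Let X be a real Banach space with a Schauder basis (e_n) with basis constant K_b. If there is a constant Γ ≥ 1 such that ‖1_A‖ ≤ Γ‖1_B‖ whenever A, B are finite subsets of ℕ with |A| ≤ |B| and either max A < min B or max B < min A (i.e., (e_n) is both conservative and reverse conservative with constant Γ), then (e_n) is democratic; more precisely, ‖1_A‖ ≤ (Γ(2K_b + 1) + 2K_b)‖1_B‖ for all finite A, B ⊂ ℕ with |A| ≤ |B|. -/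
open Filter Topology

open SchauderBasisSys

namespace SchauderBasisSys

variable {X : Type*} [NormedAddCommGroup X] [NormedSpace ℝ X]

theorem f_ind (S : SchauderBasisSys X) (B : Finset ℕ) (n : ℕ) :
    S.f n (S.ind B) = if n ∈ B then 1 else 0 := by
  simp [ind, map_sum, S.biorth]

/-- The partial sums of `1_B` are the indicator vectors of the initial segments of `B`. -/
theorem sum_range_f_ind (S : SchauderBasisSys X) (B : Finset ℕ) (N : ℕ) :
    ∑ n ∈ Finset.range N, S.f n (S.ind B) • S.e n = S.ind {i ∈ B | i < N} := by
  simp only [f_ind, ite_smul, one_smul, zero_smul, ← Finset.sum_filter]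
  rw [ind]
  congr 1
  ext i
  simp [and_comm]

theorem ind_filter_lt_add_ind_filter_ge (S : SchauderBasisSys X) (B : Finset ℕ) (N : ℕ) :
    S.ind {i ∈ B | i < N} + S.ind {i ∈ B | N ≤ i} = S.ind B := by
  simp only [ind, ← not_lt]
  exact Finset.sum_filter_add_sum_filter_not B _ _

theorem ind_filter_lt_succ (S : SchauderBasisSys X) {B : Finset ℕ} {N : ℕ} (hN : N ∈ B) :
    S.ind {i ∈ B | i < N + 1} = S.e N + S.ind {i ∈ B | i < N} := by
  have h : ({i ∈ B | i < N + 1} : Finset ℕ) = insert N {i ∈ B | i < N} := by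
    ext i
    simp only [Finset.mem_filter, Finset.mem_insert]
    grind
  rw [h, ind, Finset.sum_insert (by simp), ind]

end SchauderBasisSys

/-- Given `|A| ≤ |B|` with `A` nonempty, the sets can be split at a point `N`, possibly after
removing the common element `N`, so that opposite halves are comparable in cardinality. -/
theorem Finset.exists_card_filter_split {A B : Finset ℕ} (h : A.card ≤ B.card)
    (hA : A.Nonempty) :
    ∃ N, ({i ∈ A | i < N}.card ≤ {i ∈ B | N ≤ i}.card ∧
        {i ∈ A | N ≤ i}.card ≤ {i ∈ B | i < N}.card) ∨
      (N ∈ A ∧ N ∈ B ∧ {i ∈ A | i < N}.card ≤ {i ∈ B | N + 1 ≤ i}.card ∧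
        {i ∈ A | N + 1 ≤ i}.card ≤ {i ∈ B | i < N}.card) := by
  have split (C : Finset ℕ) (N : ℕ) :
      {i ∈ C | i < N}.card + {i ∈ C | N ≤ i}.card = C.card := by
    simpa only [not_lt] using Finset.card_filter_add_card_filter_not (s := C) (· < N)
  have step (C : Finset ℕ) (N : ℕ) :
      {i ∈ C | i < N + 1}.card = {i ∈ C | i < N}.card + if N ∈ C then 1 else 0 := by
    split_ifs with hN
    · rw [← Finset.card_insert_of_notMem (a := N) (by simp)]
      congr 1
      ext i
      simp only [Finset.mem_filter, Finset.mem_insert]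
      grind
    · congr 1
      ext i
      simp only [Finset.mem_filter]
      grind
  have hex : ∃ M, {i ∈ B | M ≤ i}.card < {i ∈ A | i < M}.card := by
    refine ⟨(A ∪ B).sup id + 1, ?_⟩
    have hle : ∀ i ∈ A ∪ B, i ≤ (A ∪ B).sup id := fun i hi => Finset.le_sup (f := id) hi
    rw [Finset.filter_true_of_mem (s := A) fun i hi =>
        Nat.lt_succ_of_le (hle i (Finset.mem_union_left _ hi)),
      Finset.filter_false_of_mem (s := B) fun i hi => by
        have := hle i (Finset.mem_union_right _ hi)
        omega]
    simpa using hA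
  obtain ⟨N, hN⟩ : ∃ N, Nat.find hex = N + 1 := by
    refine Nat.exists_eq_succ_of_ne_zero fun h0 => ?_
    have := Nat.find_spec hex
    rw [h0] at this
    simp at this
  have hlt := Nat.find_spec hex
  have hle := Nat.find_min hex (m := N) (by omega)
  rw [hN] at hlt
  refine ⟨N, ?_⟩
  have a1 := split A N
  have a2 := split A (N + 1)
  have a3 := step A N
  have b1 := split B N
  have b2 := split B (N + 1)
  have b3 := step B N
  by_cases hNA : N ∈ A <;> by_cases hNB : N ∈ B <;>
    simp only [hNA, hNB, if_true, if_false, true_and, false_and, or_false] at * <;> omega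

/-- If a Schauder basis with basis constant `K_b` is simultaneously
conservative and reverse conservative with constant `Γ ≥ 1`, then it is democratic with
constant `Γ(2K_b + 1) + 2K_b`. -/
theorem stmt_4 {X : Type*} [NormedAddCommGroup X] [NormedSpace ℝ X] [CompleteSpace X]
    (S : SchauderBasisSys X) (Kb Γ : ℝ) (hΓ : 1 ≤ Γ)
    (hKb : ∀ (x : X) (N : ℕ), ‖∑ n ∈ Finset.range N, S.f n x • S.e n‖ ≤ Kb * ‖x‖)
    (hcons : ∀ A B : Finset ℕ, A.card ≤ B.card →
      ((∀ i ∈ A, ∀ j ∈ B, i < j) ∨ (∀ i ∈ A, ∀ j ∈ B, j < i)) →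
      ‖S.ind A‖ ≤ Γ * ‖S.ind B‖) :
    ∀ A B : Finset ℕ, A.card ≤ B.card →
      ‖S.ind A‖ ≤ (Γ * (2 * Kb + 1) + 2 * Kb) * ‖S.ind B‖ := by
  intro A B hAB
  set b := ‖S.ind B‖
  have hlow (N : ℕ) : ‖S.ind {i ∈ B | i < N}‖ ≤ Kb * b := by
    simpa only [S.sum_range_f_ind] using hKb (S.ind B) N
  have hhigh (N : ℕ) : ‖S.ind {i ∈ B | N ≤ i}‖ ≤ (Kb + 1) * b := by
    rw [eq_sub_of_add_eq' (S.ind_filter_lt_add_ind_filter_ge B N)]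
    linarith [norm_sub_le (S.ind B) (S.ind {i ∈ B | i < N}), hlow N]
  have hKb0 : 0 ≤ Kb * b := (norm_nonneg _).trans (hlow 0)
  have hΓ0 : 0 ≤ Γ := zero_le_one.trans hΓ
  have hleft {N M : ℕ} (hNM : N ≤ M)
      (hc : {i ∈ A | i < N}.card ≤ {i ∈ B | M ≤ i}.card) :
      ‖S.ind {i ∈ A | i < N}‖ ≤ Γ * ((Kb + 1) * b) :=
    (hcons _ _ hc (.inl fun i hi j hj => (Finset.mem_filter.1 hi).2.trans_le
      (hNM.trans (Finset.mem_filter.1 hj).2))).trans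
      (mul_le_mul_of_nonneg_left (hhigh M) hΓ0)
  have hright {N M : ℕ} (hNM : N ≤ M)
      (hc : {i ∈ A | M ≤ i}.card ≤ {i ∈ B | i < N}.card) :
      ‖S.ind {i ∈ A | M ≤ i}‖ ≤ Γ * (Kb * b) :=
    (hcons _ _ hc (.inr fun i hi j hj => (Finset.mem_filter.1 hj).2.trans_le
      (hNM.trans (Finset.mem_filter.1 hi).2))).trans
      (mul_le_mul_of_nonneg_left (hlow N) hΓ0)
  rcases A.eq_empty_or_nonempty with rfl | hA
  · have : 0 ≤ Γ * (2 * (Kb * b) + b) + 2 * (Kb * b) := by positivity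
    simp only [ind, Finset.sum_empty, norm_zero]
    linarith
  obtain ⟨N, ⟨h1, h2⟩ | ⟨hNA, hNB, h1, h2⟩⟩ := Finset.exists_card_filter_split hAB hA
  · rw [← S.ind_filter_lt_add_ind_filter_ge A N]
    refine (norm_add_le _ _).trans ?_
    linarith [hleft le_rfl h1, hright le_rfl h2]
  · have he : ‖S.e N‖ ≤ 2 * (Kb * b) := by
      rw [eq_sub_of_add_eq (S.ind_filter_lt_succ hNB).symm]
      linarith [norm_sub_le (S.ind {i ∈ B | i < N + 1}) (S.ind {i ∈ B | i < N}),
        hlow N, hlow (N + 1)]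
    rw [← S.ind_filter_lt_add_ind_filter_ge A (N + 1), S.ind_filter_lt_succ hNA]
    refine norm_add₃_le.trans ?_
    linarith [hleft N.le_succ h1, hright N.le_succ h2]
end
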